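/- Let {x^k}, {t_k} be generated by the multiobjective MFISTA algorithm, and define σ_k(z) := min_{i=1,…,m} ( F_i(x^k) − F_i(z) ). Then for every z ∈ ℝ^n and every k ≥ 1: t_k² · σ_k(z) ≤ (ℓ/2)‖x^0 − z‖². -/

import Mathlib

open scoped RealInnerProductSpace

noncomputable abbrev E (n : ℕ) := EuclideanSpace ℝ (Fin n)

/-! Strong convexity of the proximal subproblem, the descent lemma and the gradient inequality give,
for the merit function `σ_k(v) = min_i (F_i(x^k) - F_i(v))`, the estimate
`σ_{k+1}(w) - σ_k(w) + σ_k(v) ≤ ℓ/2 (‖v - y^{k+1}‖² - ‖v - z^{k+1}‖²)` for all `v` and `w`.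
Take `v = w` with weight `t_{k+1}` and `v = x^k` with weight `t_{k+1}² - t_{k+1} = t_k²`.
Stewart's identity turns the weighted sum of the right-hand sides into a difference of squared
distances to `w` of points on the line through `x^k`, and the rule for `y^{k+1}` makes that
difference telescope. Hence `t_k² σ_k(w) + ℓ/2 ‖x^{k-1} + t_k (z^k - x^{k-1}) - w‖²` is
nonincreasing in `k`.
-/

section

open AffineMap Filter Set Topology
open scoped Gradient NNReal

section Convex

variable {V : Type*}

lemma convexOn_ciSup {ι : Sort*} [Nonempty ι] [AddCommGroup V] [Module ℝ V] {s : Set V}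
    {h : ι → V → ℝ} (hbdd : ∀ v ∈ s, BddAbove (range fun i ↦ h i v))
    (hconv : ∀ i, ConvexOn ℝ s (h i)) : ConvexOn ℝ s fun v ↦ ⨆ i, h i v := by
  obtain ⟨i₀⟩ := ‹Nonempty ι›
  refine ⟨(hconv i₀).1, fun v hv w hw a b ha hb hab ↦ ciSup_le fun i ↦ ?_⟩
  refine ((hconv i).2 hv hw ha hb hab).trans ?_
  gcongr
  exacts [le_ciSup (hbdd v hv) i, le_ciSup (hbdd w hw) i]

lemma add_modulus_le_of_isMinOn [NormedAddCommGroup V] [NormedSpace ℝ V] {s : Set V} {φ : ℝ → ℝ}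
    {h : V → ℝ} {p w : V} (hconv : UniformConvexOn s φ h) (hmin : IsMinOn h s p) (hp : p ∈ s)
    (hw : w ∈ s) : h p + φ ‖p - w‖ ≤ h w := by
  have on_segment : ∀ r ∈ Ioo (0 : ℝ) 1, h p + (1 - r) * φ ‖p - w‖ ≤ h w := by
    rintro r ⟨hr0, hr1⟩
    have hseg : 1 - r + r = 1 := sub_add_cancel 1 r
    have hle := (isMinOn_iff.1 hmin _ (hconv.1 hp hw (sub_nonneg.2 hr1.le) hr0.le hseg)).trans
      (hconv.2 hp hw (sub_nonneg.2 hr1.le) hr0.le hseg)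
    simp only [smul_eq_mul] at hle
    refine le_of_mul_le_mul_left ?_ hr0
    linarith
  have tendsto_zero : Tendsto (fun r : ℝ ↦ h p + (1 - r) * φ ‖p - w‖) (𝓝[>] 0)
      (𝓝 (h p + (1 - 0) * φ ‖p - w‖)) :=
    (Continuous.tendsto (by fun_prop) 0).mono_left nhdsWithin_le_nhds
  simpa only [sub_zero, one_mul] using
    le_of_tendsto tendsto_zero (eventually_of_mem (Ioo_mem_nhdsGT one_pos) on_segment)

variable [NormedAddCommGroup V] [InnerProductSpace ℝ V]

lemma strongConvexOn_add_sq_norm_sub {s : Set V} {h : V → ℝ} (hconv : ConvexOn ℝ s h) (ℓ : ℝ)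
    (b : V) : StrongConvexOn s ℓ fun v ↦ h v + ℓ / 2 * ‖v - b‖ ^ 2 := by
  rw [strongConvexOn_iff_convex]
  have hlin : ConvexOn ℝ s (innerₛₗ ℝ (-ℓ • b)) := LinearMap.convexOn _ hconv.1
  refine ((hconv.add hlin).add_const (ℓ / 2 * ‖b‖ ^ 2)).congr fun v _ ↦ ?_
  simp only [Pi.add_apply, innerₛₗ_apply_apply, real_inner_smul_left, norm_sub_sq_real,
    real_inner_comm b v]
  ring

lemma add_sq_norm_sub_le_of_isMinOn_prox {h : V → ℝ} (hconv : ConvexOn ℝ univ h) {ℓ : ℝ} {b p : V}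
    (hmin : IsMinOn (fun v ↦ h v + ℓ / 2 * ‖v - b‖ ^ 2) univ p) (v : V) :
    h p + ℓ / 2 * ‖p - b‖ ^ 2 + ℓ / 2 * ‖v - p‖ ^ 2 ≤ h v + ℓ / 2 * ‖v - b‖ ^ 2 := by
  rw [norm_sub_rev v p]
  exact add_modulus_le_of_isMinOn (strongConvexOn_add_sq_norm_sub hconv ℓ b) hmin
    (mem_univ p) (mem_univ v)

lemma sq_norm_lineMap_sub (x p w : V) (t : ℝ) :
    ‖lineMap x p t - w‖ ^ 2 =
      (1 - t) * ‖x - w‖ ^ 2 + t * ‖p - w‖ ^ 2 - t * (1 - t) * ‖x - p‖ ^ 2 := by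
  have hline : lineMap x p t - w = (1 - t) • (x - w) + t • (p - w) := by
    rw [lineMap_apply_module]
    module
  rw [hline, ← sub_sub_sub_cancel_right x p w, norm_add_sq_real,
    norm_sub_sq_real (x - w), norm_smul, norm_smul, real_inner_smul_left, real_inner_smul_right,
    mul_pow, mul_pow, Real.norm_eq_abs, Real.norm_eq_abs, sq_abs, sq_abs]
  ring

end Convex

section Gradient

variable {V : Type*} [NormedAddCommGroup V] [InnerProductSpace ℝ V] [CompleteSpace V] {f : V → ℝ}

lemma hasDerivAt_comp_lineMap {a b v : V} {t : ℝ} (hf : HasGradientAt f v (lineMap a b t)) :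
    HasDerivAt (fun s : ℝ ↦ f (lineMap a b s)) ⟪v, b - a⟫ t :=
  hf.hasFDerivAt.comp_hasDerivAt t hasDerivAt_lineMap

lemma add_inner_le_of_convexOn {s : Set V} {a b v : V} (hf : ConvexOn ℝ s f)
    (hv : HasGradientAt f v a) (ha : a ∈ s) (hb : b ∈ s) : f a + ⟪v, b - a⟫ ≤ f b := by
  have hderiv : HasDerivAt (f ∘ lineMap (k := ℝ) a b) ⟪v, b - a⟫ 0 :=
    hasDerivAt_comp_lineMap (by rwa [lineMap_apply_zero])
  have hslope := (hf.comp_affineMap (lineMap a b)).le_slope_of_hasDerivAt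
    (by simpa using ha) (by simpa using hb) one_pos hderiv
  simp only [slope_def_field, Function.comp_apply, lineMap_apply_one, lineMap_apply_zero, sub_zero,
    div_one] at hslope
  linarith

lemma le_add_inner_add_sq_of_lipschitzWith {f' : V → V} {K : ℝ≥0}
    (hf : ∀ v, HasGradientAt f (f' v) v) (hf' : LipschitzWith K f') (a b : V) :
    f b ≤ f a + ⟪f' a, b - a⟫ + K / 2 * ‖b - a‖ ^ 2 := by
  have hderiv (s : ℝ) : HasDerivAt (fun s : ℝ ↦ f (lineMap a b s))
      ⟪f' (lineMap a b s), b - a⟫ s := hasDerivAt_comp_lineMap (hf _)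
  have hderiv_bound (s : ℝ) : HasDerivAt
      (fun s ↦ f a + s * ⟪f' a, b - a⟫ + s ^ 2 * (K / 2 * ‖b - a‖ ^ 2))
      (⟪f' a, b - a⟫ + K * s * ‖b - a‖ ^ 2) s :=
    ((((hasDerivAt_id s).mul_const _).const_add _).add
      ((hasDerivAt_pow 2 s).mul_const _)).congr_deriv (by norm_num; ring)
  have deriv_le : ∀ s ∈ Ico (0 : ℝ) 1,
      ⟪f' (lineMap a b s), b - a⟫ ≤ ⟪f' a, b - a⟫ + K * s * ‖b - a‖ ^ 2 := by
    rintro s ⟨hs, -⟩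
    rw [← sub_le_iff_le_add', ← inner_sub_left]
    calc ⟪f' (lineMap a b s) - f' a, b - a⟫
        ≤ ‖f' (lineMap a b s) - f' a‖ * ‖b - a‖ := real_inner_le_norm _ _
      _ ≤ K * ‖lineMap a b s - a‖ * ‖b - a‖ := by gcongr; exact hf'.norm_sub_le _ _
      _ = K * s * ‖b - a‖ ^ 2 := by
        rw [← dist_eq_norm, dist_lineMap_left, Real.norm_of_nonneg hs, dist_eq_norm,
          norm_sub_rev a b]
        ring
  have hle := image_le_of_deriv_right_le_deriv_boundary
    (fun s _ ↦ (hderiv s).continuousAt.continuousWithinAt)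
    (fun s _ ↦ (hderiv s).hasDerivWithinAt) (by simp)
    (fun s _ ↦ (hderiv_bound s).continuousAt.continuousWithinAt)
    (fun s _ ↦ (hderiv_bound s).hasDerivWithinAt) deriv_le (right_mem_Icc.2 zero_le_one)
  simpa only [lineMap_apply_one, one_mul, one_pow] using hle

end Gradient

/-- The merit function `σ` of multiobjective optimization, `minGap F a w = min_i (F_i a - F_i w)`.
For finite nonempty `ι` it is positive exactly when `w` is strictly better than `a` in every
objective. -/
noncomputable def minGap {ι α : Type*} (F : ι → α → ℝ) (a w : α) : ℝ :=
  ⨅ i, (F i a - F i w)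

section MinGap

variable {ι α : Type*} {F : ι → α → ℝ}

lemma minGap_le [Finite ι] (a w : α) (i : ι) : minGap F a w ≤ F i a - F i w :=
  ciInf_le (finite_range _).bddBelow i

variable [Nonempty ι]

lemma minGap_self (a : α) : minGap F a a = 0 := by
  simp only [minGap, sub_self, ciInf_const]

lemma minGap_add_minGap_le [Finite ι] (a b c : α) :
    minGap F a b + minGap F b c ≤ minGap F a c :=
  le_ciInf fun i ↦ by linarith [minGap_le (F := F) a b i, minGap_le (F := F) b c i]

lemma minGap_le_ciSup [Finite ι] (a w : α) : minGap F a w ≤ ⨆ i, (F i a - F i w) :=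
  ciInf_le_ciSup (finite_range _).bddBelow (finite_range _).bddAbove

end MinGap

section Proximal

variable {V ι : Type*} [NormedAddCommGroup V] [InnerProductSpace ℝ V] [CompleteSpace V]

/-- A convex composite multiobjective problem with objectives `F_i = f_i + g_i`:
each `f_i` is convex and differentiable with `ℓ`-Lipschitz gradient, and each `g_i` is convex.
A common Lipschitz constant `ℓ` stands for any upper bound of the individual ones. -/
structure IsConvexComposite (f g : ι → V → ℝ) (ℓ : ℝ≥0) : Prop where
  convexOn_smooth : ∀ i, ConvexOn ℝ univ (f i)
  differentiable : ∀ i, Differentiable ℝ (f i)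
  lipschitzWith_gradient : ∀ i, LipschitzWith ℓ (∇ (f i))
  convexOn_nonsmooth : ∀ i, ConvexOn ℝ univ (g i)

/-- The largest increase over `i` of the objectives `f_i + g_i` from `a` to `w`, with `f_i` replaced
at `w` by its linearization at `b`. Adding `ℓ / 2 * ‖w - b‖ ^ 2` gives the function `φ_{a,b,ℓ}(w)`
that is minimized in a proximal step. -/
noncomputable def linearizedMaxIncrease (f g : ι → V → ℝ) (a b w : V) : ℝ :=
  ⨆ i, (⟪∇ (f i) b, w - b⟫ + g i w + f i b - (f + g) i a)

variable {f g : ι → V → ℝ} {ℓ : ℝ≥0} [Finite ι] [Nonempty ι]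

lemma convexOn_linearizedMaxIncrease (hg : ∀ i, ConvexOn ℝ univ (g i)) (a b : V) :
    ConvexOn ℝ univ (linearizedMaxIncrease f g a b) := by
  refine convexOn_ciSup (fun _ _ ↦ (finite_range _).bddAbove) fun i ↦ ?_
  have hlin : ConvexOn ℝ univ (innerₛₗ ℝ (∇ (f i) b)) := LinearMap.convexOn _ convex_univ
  refine ((hlin.add (hg i)).add_const (f i b - (f + g) i a - ⟪∇ (f i) b, b⟫)).congr fun w _ ↦ ?_
  simp only [Pi.add_apply, innerₛₗ_apply_apply, inner_sub_right]
  ring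

lemma linearizedMaxIncrease_le_neg_minGap (hf : ∀ i, ConvexOn ℝ univ (f i))
    (hdiff : ∀ i, Differentiable ℝ (f i)) (a b w : V) :
    linearizedMaxIncrease f g a b w ≤ -minGap (f + g) a w := by
  refine ciSup_le fun i ↦ ?_
  have hgap := minGap_le (F := f + g) a w i
  have hgrad := add_inner_le_of_convexOn (hf i) (hdiff i b).hasGradientAt (mem_univ b) (mem_univ w)
  simp only [Pi.add_apply] at hgap ⊢
  linarith

lemma neg_minGap_le_linearizedMaxIncrease_add_sq (hdiff : ∀ i, Differentiable ℝ (f i))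
    (hlip : ∀ i, LipschitzWith ℓ (∇ (f i))) (a b w : V) :
    -minGap (f + g) a w ≤ linearizedMaxIncrease f g a b w + ℓ / 2 * ‖w - b‖ ^ 2 := by
  rw [neg_le]
  refine le_ciInf fun i ↦ ?_
  have hsup : ⟪∇ (f i) b, w - b⟫ + g i w + f i b - (f + g) i a ≤ linearizedMaxIncrease f g a b w :=
    le_ciSup (f := fun i ↦ ⟪∇ (f i) b, w - b⟫ + g i w + f i b - (f + g) i a)
      (finite_range _).bddAbove i
  have hdescent := le_add_inner_add_sq_of_lipschitzWith
    (fun v ↦ (hdiff i v).hasGradientAt) (hlip i) b w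
  simp only [Pi.add_apply] at hsup ⊢
  linarith

lemma IsConvexComposite.minGap_sub_minGap_le_of_isMinOn (hfg : IsConvexComposite f g ℓ) {a b p : V}
    (hp : IsMinOn (fun w ↦ linearizedMaxIncrease f g a b w + ℓ / 2 * ‖w - b‖ ^ 2) univ p) (v : V) :
    minGap (f + g) a v - minGap (f + g) a p ≤ ℓ / 2 * (‖v - b‖ ^ 2 - ‖v - p‖ ^ 2) := by
  have hgrowth := add_sq_norm_sub_le_of_isMinOn_prox
    (convexOn_linearizedMaxIncrease hfg.convexOn_nonsmooth a b) hp v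
  have hupper := linearizedMaxIncrease_le_neg_minGap (g := g) hfg.convexOn_smooth
    hfg.differentiable a b v
  have hlower := neg_minGap_le_linearizedMaxIncrease_add_sq (g := g) hfg.differentiable
    hfg.lipschitzWith_gradient a b p
  linarith

end Proximal

/-- Nesterov's update `t ↦ (1 + √(1 + 4 t²)) / 2` of the momentum parameter. -/
noncomputable def nesterovNext (t : ℝ) : ℝ :=
  (1 + √(1 + 4 * t ^ 2)) / 2

lemma nesterovNext_sq_sub_self (t : ℝ) : nesterovNext t ^ 2 - nesterovNext t = t ^ 2 := by
  have hsq : √(1 + 4 * t ^ 2) ^ 2 = 1 + 4 * t ^ 2 := Real.sq_sqrt (by positivity)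
  rw [nesterovNext]
  linarith

lemma nesterovNext_pos (t : ℝ) : 0 < nesterovNext t := by
  rw [nesterovNext]
  positivity

section MFISTA

variable {V ι : Type*} [NormedAddCommGroup V] [InnerProductSpace ℝ V] [CompleteSpace V]

/-- `x`, `y`, `z`, `t` are generated by the multiobjective MFISTA algorithm with step parameter `ℓ`
for the objectives `f_i + g_i`. Iteration `k + 1` computes `z (k + 1)`, `x (k + 1)` and `y (k + 2)`;
the values `y 0`, `z 0` and `t 0` are junk, since in the algorithm these sequences start at `1`. -/
structure IsMFISTA (f g : ι → V → ℝ) (ℓ : ℝ≥0) (x y z : ℕ → V) (t : ℕ → ℝ) : Prop where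
  y_one : y 1 = x 0
  t_one : t 1 = 1
  t_succ : ∀ k, t (k + 2) = nesterovNext (t (k + 1))
  isMinOn_z : ∀ k, IsMinOn (fun w ↦ linearizedMaxIncrease f g (x k) (y (k + 1)) w +
    ℓ / 2 * ‖w - y (k + 1)‖ ^ 2) univ (z (k + 1))
  x_accept : ∀ k, 0 ≤ (⨆ i, ((f + g) i (x k) - (f + g) i (z (k + 1)))) → x (k + 1) = z (k + 1)
  x_reject : ∀ k, ¬0 ≤ (⨆ i, ((f + g) i (x k) - (f + g) i (z (k + 1)))) → x (k + 1) = x k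
  y_succ : ∀ k, y (k + 2) = x (k + 1) + (t (k + 1) / t (k + 2)) • (z (k + 1) - x (k + 1)) +
    ((t (k + 1) - 1) / t (k + 2)) • (x (k + 1) - x k)

/-- The Lyapunov function of MFISTA for objectives `F` and a comparison point `w`, after
iteration `k + 1`. -/
noncomputable def mfistaEnergy (F : ι → V → ℝ) (ℓ : ℝ≥0) (x z : ℕ → V) (t : ℕ → ℝ) (w : V)
    (k : ℕ) : ℝ :=
  t (k + 1) ^ 2 * minGap F (x (k + 1)) w +
    ℓ / 2 * ‖lineMap (x k) (z (k + 1)) (t (k + 1)) - w‖ ^ 2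

namespace IsMFISTA

variable {f g : ι → V → ℝ} {ℓ : ℝ≥0} {x y z : ℕ → V} {t : ℕ → ℝ}

lemma lineMap_y_eq_lineMap_z (hA : IsMFISTA f g ℓ x y z t) (k : ℕ) :
    lineMap (x (k + 1)) (y (k + 2)) (t (k + 2)) = lineMap (x k) (z (k + 1)) (t (k + 1)) := by
  have ht : t (k + 2) ≠ 0 := hA.t_succ k ▸ (nesterovNext_pos _).ne'
  rw [lineMap_apply_module', lineMap_apply_module', hA.y_succ, add_assoc, add_sub_cancel_left,
    smul_add, smul_smul, smul_smul, mul_div_cancel₀ _ ht, mul_div_cancel₀ _ ht]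
  module

variable [Finite ι] [Nonempty ι]

lemma minGap_succ_le (hA : IsMFISTA f g ℓ x y z t) (k : ℕ) (w : V) :
    minGap (f + g) (x (k + 1)) w ≤
      minGap (f + g) (x k) w - minGap (f + g) (x k) (z (k + 1)) := by
  by_cases haccept : 0 ≤ ⨆ i, ((f + g) i (x k) - (f + g) i (z (k + 1)))
  · rw [hA.x_accept k haccept]
    linarith [minGap_add_minGap_le (F := f + g) (x k) (z (k + 1)) w]
  · rw [hA.x_reject k haccept]
    linarith [minGap_le_ciSup (F := f + g) (x k) (z (k + 1))]

lemma minGap_succ_sub_le (hA : IsMFISTA f g ℓ x y z t) (hfg : IsConvexComposite f g ℓ) (k : ℕ)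
    (v w : V) :
    minGap (f + g) (x (k + 1)) w - minGap (f + g) (x k) w + minGap (f + g) (x k) v ≤
      ℓ / 2 * (‖v - y (k + 1)‖ ^ 2 - ‖v - z (k + 1)‖ ^ 2) := by
  linarith [hA.minGap_succ_le k w, hfg.minGap_sub_minGap_le_of_isMinOn (hA.isMinOn_z k) v]

lemma mfistaEnergy_zero_le (hA : IsMFISTA f g ℓ x y z t) (hfg : IsConvexComposite f g ℓ) (w : V) :
    mfistaEnergy (f + g) ℓ x z t w 0 ≤ ℓ / 2 * ‖x 0 - w‖ ^ 2 := by
  have hstep := hA.minGap_succ_sub_le hfg 0 w w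
  simp only [zero_add, hA.y_one, norm_sub_rev w] at hstep
  simp only [mfistaEnergy, zero_add, hA.t_one, lineMap_apply_one]
  linarith

lemma mfistaEnergy_succ_le (hA : IsMFISTA f g ℓ x y z t) (hfg : IsConvexComposite f g ℓ) (w : V)
    (k : ℕ) : mfistaEnergy (f + g) ℓ x z t w (k + 1) ≤ mfistaEnergy (f + g) ℓ x z t w k := by
  have ht : t (k + 2) ^ 2 - t (k + 2) = t (k + 1) ^ 2 := by
    rw [hA.t_succ, nesterovNext_sq_sub_self]
  have ht_nonneg : 0 ≤ t (k + 2) := hA.t_succ k ▸ (nesterovNext_pos _).le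
  have at_target := mul_le_mul_of_nonneg_left (hA.minGap_succ_sub_le hfg (k + 1) w w) ht_nonneg
  have at_iterate := mul_le_mul_of_nonneg_left
    (hA.minGap_succ_sub_le hfg (k + 1) (x (k + 1)) w) (sq_nonneg (t (k + 1)))
  rw [minGap_self, ← ht] at at_iterate
  rw [norm_sub_rev w, norm_sub_rev w] at at_target
  simp only [mfistaEnergy]
  rw [← hA.lineMap_y_eq_lineMap_z k, ← ht, sq_norm_lineMap_sub, sq_norm_lineMap_sub]
  linarith

end IsMFISTA

theorem stmt_14_general {f g : ι → V → ℝ} {ℓ : ℝ≥0} {x y z : ℕ → V} {t : ℕ → ℝ} [Finite ι]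
    [Nonempty ι] (hA : IsMFISTA f g ℓ x y z t) (hfg : IsConvexComposite f g ℓ) (w : V)
    {k : ℕ} (hk : 1 ≤ k) : t k ^ 2 * minGap (f + g) (x k) w ≤ ℓ / 2 * ‖x 0 - w‖ ^ 2 := by
  obtain ⟨k, rfl⟩ := Nat.exists_eq_add_of_le' hk
  calc t (k + 1) ^ 2 * minGap (f + g) (x (k + 1)) w
      ≤ mfistaEnergy (f + g) ℓ x z t w k := le_add_of_nonneg_right (by positivity)
    _ ≤ mfistaEnergy (f + g) ℓ x z t w 0 :=
      antitone_nat_of_succ_le (hA.mfistaEnergy_succ_le hfg w) (Nat.zero_le k)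
    _ ≤ ℓ / 2 * ‖x 0 - w‖ ^ 2 := hA.mfistaEnergy_zero_le hfg w

end MFISTA

end

theorem stmt_14
    (n m : ℕ) (hn : 1 ≤ n) (hm : 1 ≤ m)
    (f g F : Fin m → E n → ℝ)
    (L : Fin m → ℝ) (hL : ∀ i, 0 < L i)
    (hfc : ∀ i, ConvexOn ℝ Set.univ (f i))
    (hfd : ∀ i, ContDiff ℝ 1 (f i))
    (hflip : ∀ i a b, ‖gradient (f i) a - gradient (f i) b‖ ≤ L i * ‖a - b‖)
    (hgc : ∀ i, ConvexOn ℝ Set.univ (g i))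
    (hF : ∀ i w, F i w = f i w + g i w)
    (ℓ : ℝ) (hℓ : 0 < ℓ) (hℓL : ∀ i, L i ≤ ℓ)
    (d : E n → E n → E n)
    (hd : ∀ a b w,
      (⨆ i, (⟪gradient (f i) b, d a b - b⟫ + g i (d a b) + f i b - F i a)) +
          ℓ / 2 * ‖d a b - b‖ ^ 2 ≤
        (⨆ i, (⟪gradient (f i) b, w - b⟫ + g i w + f i b - F i a)) +
          ℓ / 2 * ‖w - b‖ ^ 2)
    (x y z : ℕ → E n) (t : ℕ → ℝ)
    (hy1 : y 1 = x 0) (ht1 : t 1 = 1)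
    (ht : ∀ k, 1 ≤ k → t (k + 1) = (1 + Real.sqrt (1 + 4 * t k ^ 2)) / 2)
    (hz : ∀ k, 1 ≤ k → z k = d (x (k - 1)) (y k))
    (hxpos : ∀ k, 1 ≤ k → 0 ≤ (⨆ i, (F i (x (k - 1)) - F i (z k))) → x k = z k)
    (hxneg : ∀ k, 1 ≤ k → ¬ 0 ≤ (⨆ i, (F i (x (k - 1)) - F i (z k))) → x k = x (k - 1))
    (hy : ∀ k, 1 ≤ k →
      y (k + 1) = x k + (t k / t (k + 1)) • (z k - x k) +
        ((t k - 1) / t (k + 1)) • (x k - x (k - 1))) :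
    ∀ (w : E n) (k : ℕ), 1 ≤ k →
      t k ^ 2 * (⨅ i, (F i (x k) - F i w)) ≤ ℓ / 2 * ‖x 0 - w‖ ^ 2 := by
  intro w k hk
  lift ℓ to NNReal using hℓ.le
  obtain rfl : F = f + g := funext₂ hF
  have : Nonempty (Fin m) := Fin.pos_iff_nonempty.1 hm
  have hfg : IsConvexComposite f g ℓ :=
    { convexOn_smooth := hfc
      differentiable := fun i ↦ (hfd i).differentiable one_ne_zero
      lipschitzWith_gradient := fun i ↦ LipschitzWith.of_dist_le_mul fun a b ↦ by
        simpa only [dist_eq_norm] using (hflip i a b).trans (by gcongr; exact hℓL i)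
      convexOn_nonsmooth := hgc }
  have hA : IsMFISTA f g ℓ x y z t :=
    { y_one := hy1
      t_one := ht1
      t_succ := fun k ↦ ht (k + 1) k.succ_pos
      isMinOn_z := fun k ↦ isMinOn_univ_iff.2 (hz (k + 1) k.succ_pos ▸ hd (x k) (y (k + 1)))
      x_accept := fun k ↦ hxpos (k + 1) k.succ_pos
      x_reject := fun k ↦ hxneg (k + 1) k.succ_pos
      y_succ := fun k ↦ hy (k + 1) k.succ_pos }
  exact stmt_14_general hA hfg w hk
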